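/- Let G be a (P_3 + P_1)-free graph with at least one edge. Then tree-α(G) = ibn(G), unless G is C_4-free but contains an induced C_5, in which case tree-α(G) = 2. -/

import Mathlib

open SimpleGraph
/-- The independence number of the subgraph of `G` induced by `s`:
the supremum of sizes of independent sets contained in `s`. -/
noncomputable def setIndepNum {V : Type*} (G : SimpleGraph V) (s : Set V) : ℕ :=
  sSup {n | ∃ t : Finset V, ↑t ⊆ s ∧ (∀ u ∈ t, ∀ v ∈ t, u ≠ v → ¬ G.Adj u v) ∧ t.card = n}

/-- A tree decomposition of a graph `G`. -/
structure TreeDecomp {V : Type*} (G : SimpleGraph V) where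
  ι : Type
  T : SimpleGraph ι
  tree : T.IsTree
  bag : ι → Set V
  bag_vert : ∀ v : V, ∃ i, v ∈ bag i
  bag_edge : ∀ u v : V, G.Adj u v → ∃ i, u ∈ bag i ∧ v ∈ bag i
  bag_conn : ∀ v : V, (T.induce {i | v ∈ bag i}).Connected

/-- The tree-independence number of `G`: the least `n` such that `G` has a tree
decomposition all of whose bags induce subgraphs with independence number at most `n`. -/
noncomputable def treeIndepNum {V : Type*} (G : SimpleGraph V) : ℕ :=
  sInf {n | ∃ D : TreeDecomp G, ∀ i, setIndepNum G (D.bag i) ≤ n}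

/-- `G` is `H`-free: no induced subgraph of `G` is isomorphic to `H`. -/
def IndFree {W V : Type*} (H : SimpleGraph W) (G : SimpleGraph V) : Prop :=
  IsEmpty (H ↪g G)

/-- The induced biclique number of `G`: the largest `s` such that `G` contains an induced
subgraph isomorphic to `K_{s,s}`. -/
noncomputable def ibn {V : Type*} (G : SimpleGraph V) : ℕ :=
  sSup {s | Nonempty (completeBipartiteGraph (Fin s) (Fin s) ↪g G)}

/-- `P_3 + P_1`: the disjoint union of a path on three vertices and an isolated vertex. -/
def P3plusP1 : SimpleGraph (Fin 3 ⊕ Fin 1) := pathGraph 3 ⊕g (⊥ : SimpleGraph (Fin 1))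

/-- A set of vertices is path-convex if it contains every path between two of its members. -/
def PathConvex {ι : Type*} (T : SimpleGraph ι) (S : Set ι) : Prop :=
  ∀ ⦃u v : ι⦄, u ∈ S → v ∈ S → ∀ p : T.Walk u v, p.IsPath → ∀ x ∈ p.support, x ∈ S

namespace PathConvex

variable {ι : Type*} {T : SimpleGraph ι} {S S' : Set ι}

theorem of_preconnected (hT : T.IsAcyclic) (h : (T.induce S).Preconnected) :
    PathConvex T S := by
  classical
  intro u v hu hv p hp x hx
  obtain ⟨q, hq⟩ := (h ⟨u, hu⟩ ⟨v, hv⟩).exists_isPath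
  have hq' := Walk.IsPath.map (f := (Embedding.induce S).toHom)
    (Embedding.induce (G := T) S).injective hq
  have heq : p = q.map (Embedding.induce S).toHom :=
    congrArg Subtype.val ((hT.subsingleton_path u v).elim ⟨p, hp⟩ ⟨_, hq'⟩)
  have hx' : x ∈ q.support.map (Embedding.induce (G := T) S).toHom := by
    rw [← Walk.support_map]
    exact heq ▸ hx
  obtain ⟨y, -, rfl⟩ := List.mem_map.1 hx'
  exact y.2

theorem inter (h : PathConvex T S) (h' : PathConvex T S') : PathConvex T (S ∩ S') :=
  fun _ _ hu hv p hp x hx => ⟨h hu.1 hv.1 p hp x hx, h' hu.2 hv.2 p hp x hx⟩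

/-- A path-convex set missing one end of an edge stays connected when this edge is deleted. -/
theorem reachable_deleteEdges (hT : T.Connected) (h : PathConvex T S) {a b u v : ι}
    (hab : a ∉ S ∨ b ∉ S) (hu : u ∈ S) (hv : v ∈ S) :
    (T.deleteEdges {s(a, b)}).Reachable u v := by
  obtain ⟨p, hp⟩ := (hT u v).exists_isPath
  refine ⟨p.toDeleteEdges {s(a, b)} ?_⟩
  rintro e he rfl
  rcases hab with ha | hb
  · exact ha (h hu hv p hp a (p.fst_mem_support_of_mem_edges he))
  · exact hb (h hu hv p hp b (p.snd_mem_support_of_mem_edges he))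

/-- Two disjoint path-convex sets of a tree have a gate: a vertex of the first set through which
every path-convex set meeting both of them passes. -/
theorem exists_gate (hT : T.IsTree) (hS : PathConvex T S) (hS' : PathConvex T S')
    (hdis : Disjoint S S') (hne : S.Nonempty) (hne' : S'.Nonempty) :
    ∃ p ∈ S, ∀ C, PathConvex T C → (C ∩ S).Nonempty → (C ∩ S').Nonempty → p ∈ C := by
  classical
  have hex : ∃ n, ∃ s ∈ S, ∃ s' ∈ S', ∃ w : T.Walk s s', w.length = n := by
    obtain ⟨s, hs⟩ := hne
    obtain ⟨s', hs'⟩ := hne'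
    obtain ⟨w⟩ := hT.connected s s'
    exact ⟨_, s, hs, s', hs', w, rfl⟩
  obtain ⟨s, hs, s', hs', w, hw⟩ := Nat.find_spec hex
  have hmin := fun m => Nat.find_min hex (m := m)
  cases w with
  | nil => exact (Set.disjoint_left.1 hdis hs hs').elim
  | @cons _ q _ hadj w =>
    have hout : ∀ x ∈ w.support, x ∉ S := by
      intro x hx hxS
      refine hmin (w.dropUntil x hx).length ?_ ⟨x, hxS, s', hs', _, rfl⟩
      rw [← hw, Walk.length_cons]
      exact Nat.lt_succ_of_le (w.length_dropUntil_le_length hx)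
    have hbridge := isAcyclic_iff_forall_adj_isBridge.1 hT.isAcyclic hadj
    refine ⟨s, hs, fun C hC hCS hCS' => ?_⟩
    by_contra hsC
    obtain ⟨c, hcC, hcS⟩ := hCS
    obtain ⟨c', hcC', hcS'⟩ := hCS'
    have h₁ := hS.reachable_deleteEdges hT.connected
      (Or.inr (hout q w.start_mem_support) : s ∉ S ∨ q ∉ S) hs hcS
    have h₂ := hC.reachable_deleteEdges hT.connected (Or.inl hsC : s ∉ C ∨ q ∉ C) hcC hcC'
    have h₃ := hS'.reachable_deleteEdges hT.connected
      (Or.inl (Set.disjoint_left.1 hdis hs) : s ∉ S' ∨ q ∉ S') hcS' hs'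
    have h₄ : (T.deleteEdges {s(s, q)}).Reachable q s' := by
      refine ⟨w.toDeleteEdges _ ?_⟩
      rintro e he rfl
      exact hout s (w.fst_mem_support_of_mem_edges he) hs
    exact isBridge_iff.1 hbridge (((h₁.trans h₂).trans h₃).trans h₄.symm)

/-- The Helly property: finitely many pairwise intersecting path-convex sets of a tree have a
common vertex. -/
theorem helly (hT : T.IsTree) {α : Type*} (A : Finset α) (F : α → Set ι)
    (hF : ∀ a ∈ A, PathConvex T (F a)) (hpair : ∀ a ∈ A, ∀ b ∈ A, (F a ∩ F b).Nonempty) :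
    ∃ i, ∀ a ∈ A, i ∈ F a := by
  classical
  suffices h : PathConvex T {i | ∀ a ∈ A, i ∈ F a} ∧ {i | ∀ a ∈ A, i ∈ F a}.Nonempty from h.2
  induction A using Finset.induction_on with
  | empty =>
    have := hT.connected.nonempty
    exact ⟨fun _ _ _ _ _ _ _ _ => by simp, Classical.arbitrary ι, by simp⟩
  | insert a A ha ih =>
    obtain ⟨hconv, hne⟩ := ih (fun b hb => hF b (Finset.mem_insert_of_mem hb))
      (fun b hb c hc => hpair b (Finset.mem_insert_of_mem hb) c (Finset.mem_insert_of_mem hc))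
    have hFa := hF a (Finset.mem_insert_self a A)
    have heq : {i | ∀ b ∈ insert a A, i ∈ F b} = F a ∩ {i | ∀ b ∈ A, i ∈ F b} := by
      ext i
      simp
    rw [heq]
    refine ⟨hFa.inter hconv, ?_⟩
    by_contra hempty
    have hdis : Disjoint (F a) {i | ∀ b ∈ A, i ∈ F b} :=
      Set.disjoint_iff_inter_eq_empty.2 (Set.not_nonempty_iff_eq_empty.1 hempty)
    have haa := hpair a (Finset.mem_insert_self a A) a (Finset.mem_insert_self a A)
    obtain ⟨p, hp, hgate⟩ := exists_gate hT hFa hconv hdis (haa.mono Set.inter_subset_left) hne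
    refine hempty ⟨p, hp, fun b hb => hgate _ (hF b (Finset.mem_insert_of_mem hb))
      (hpair b (Finset.mem_insert_of_mem hb) a (Finset.mem_insert_self a A)) ?_⟩
    obtain ⟨r, hr⟩ := hne
    exact ⟨r, hr b hb, hr⟩

end PathConvex

section IndependenceNumbers

variable {V : Type} {G : SimpleGraph V}

theorem card_le_setIndepNum [Finite V] {s : Set V} {t : Finset V} (hts : ↑t ⊆ s)
    (ht : ∀ u ∈ t, ∀ v ∈ t, u ≠ v → ¬ G.Adj u v) : t.card ≤ setIndepNum G s := by
  have := Fintype.ofFinite V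
  refine le_csSup ⟨Fintype.card V, ?_⟩ ⟨t, hts, ht, rfl⟩
  rintro n ⟨t, -, -, rfl⟩
  exact t.card_le_univ

theorem setIndepNum_le {s : Set V} {n : ℕ}
    (h : ∀ t : Finset V, ↑t ⊆ s → (∀ u ∈ t, ∀ v ∈ t, u ≠ v → ¬ G.Adj u v) → t.card ≤ n) :
    setIndepNum G s ≤ n := by
  refine csSup_le ⟨0, ∅, by simp⟩ ?_
  rintro _ ⟨t, hts, ht, rfl⟩
  exact h t hts ht

theorem setIndepNum_le_one {s : Set V} (h : ∀ u ∈ s, ∀ v ∈ s, u ≠ v → G.Adj u v) :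
    setIndepNum G s ≤ 1 := by
  refine setIndepNum_le fun t hts ht => Finset.card_le_one.2 fun u hu v hv => ?_
  by_contra huv
  exact ht u hu v hv huv (h u (hts hu) v (hts hv) huv)

theorem treeIndepNum_le (D : TreeDecomp G) {n : ℕ} (h : ∀ i, setIndepNum G (D.bag i) ≤ n) :
    treeIndepNum G ≤ n :=
  Nat.sInf_le ⟨D, h⟩

/-- The tree decomposition with a single bag. -/
def TreeDecomp.single (G : SimpleGraph V) : TreeDecomp G where
  ι := Unit
  T := ⊥
  tree := IsTree.of_subsingleton
  bag _ := Set.univ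
  bag_vert _ := ⟨(), trivial⟩
  bag_edge _ _ _ := ⟨(), trivial, trivial⟩
  bag_conn v := by
    have : Nonempty {i : Unit | v ∈ (Set.univ : Set V)} := ⟨⟨(), trivial⟩⟩
    exact IsTree.of_subsingleton.connected

theorem exists_treeDecomp_setIndepNum_le (G : SimpleGraph V) :
    ∃ D : TreeDecomp G, ∀ i, setIndepNum G (D.bag i) ≤ treeIndepNum G :=
  Nat.sInf_mem
    (s := {n | ∃ D : TreeDecomp G, ∀ i, setIndepNum G (D.bag i) ≤ n})
    ⟨setIndepNum G Set.univ, TreeDecomp.single G, fun _ => le_rfl⟩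

theorem bddAbove_induced_biclique [Finite V] (G : SimpleGraph V) :
    BddAbove {s | Nonempty (completeBipartiteGraph (Fin s) (Fin s) ↪g G)} := by
  refine ⟨Nat.card V, ?_⟩
  rintro s ⟨e⟩
  have h := Nat.card_le_card_of_injective _ (e.injective.comp Sum.inl_injective)
  simpa using h

theorem le_ibn [Finite V] {A B : Finset V} (hcard : A.card = B.card)
    (hA : ∀ u ∈ A, ∀ v ∈ A, u ≠ v → ¬ G.Adj u v) (hB : ∀ u ∈ B, ∀ v ∈ B, u ≠ v → ¬ G.Adj u v)
    (hAB : ∀ a ∈ A, ∀ b ∈ B, G.Adj a b) : A.card ≤ ibn G := by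
  have hA' : ∀ u ∈ A, ∀ v ∈ A, ¬ G.Adj u v := fun u hu v hv h => hA u hu v hv h.ne h
  have hB' : ∀ u ∈ B, ∀ v ∈ B, ¬ G.Adj u v := fun u hu v hv h => hB u hu v hv h.ne h
  refine le_csSup (bddAbove_induced_biclique G) ⟨⟨⟨Sum.elim (fun i => (A.equivFin.symm i : V))
    (fun i => (B.equivFinOfCardEq hcard.symm).symm i), ?_⟩, ?_⟩⟩
  · refine Function.Injective.sumElim
      (Subtype.val_injective.comp (Equiv.injective _))
      (Subtype.val_injective.comp (Equiv.injective _)) fun i j h => ?_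
    have hij := hAB _ (A.equivFin.symm i).2 _ ((B.equivFinOfCardEq hcard.symm).symm j).2
    exact hij.ne h
  · rintro (i | i) (j | j)
    · simpa using hA' _ (A.equivFin.symm i).2 _ (A.equivFin.symm j).2
    · simpa using hAB _ (A.equivFin.symm i).2 _ ((B.equivFinOfCardEq hcard.symm).symm j).2
    · simpa using (hAB _ (A.equivFin.symm j).2 _ ((B.equivFinOfCardEq hcard.symm).symm i).2).symm
    · simpa using hB' _ ((B.equivFinOfCardEq hcard.symm).symm i).2 _
        ((B.equivFinOfCardEq hcard.symm).symm j).2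

end IndependenceNumbers

section LowerBounds

variable {V : Type} {G : SimpleGraph V}

theorem TreeDecomp.pathConvex (D : TreeDecomp G) (v : V) : PathConvex D.T {i | v ∈ D.bag i} :=
  .of_preconnected D.tree.isAcyclic (D.bag_conn v).preconnected

/-- Every tree decomposition has a bag containing one side of a given biclique. -/
theorem TreeDecomp.exists_bag_of_biclique (D : TreeDecomp G) (A B : Finset V)
    (hAB : ∀ a ∈ A, ∀ b ∈ B, G.Adj a b) : ∃ i, ↑A ⊆ D.bag i ∨ ↑B ⊆ D.bag i := by
  by_cases h : ∀ a ∈ A, ∀ a' ∈ A, ({i | a ∈ D.bag i} ∩ {i | a' ∈ D.bag i}).Nonempty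
  · obtain ⟨i, hi⟩ := PathConvex.helly D.tree A _ (fun a _ => D.pathConvex a) h
    exact ⟨i, Or.inl hi⟩
  · push Not at h
    obtain ⟨a, ha, a', ha', hempty⟩ := h
    obtain ⟨i, -, hi⟩ := PathConvex.exists_gate D.tree (D.pathConvex a) (D.pathConvex a')
      (Set.disjoint_iff_inter_eq_empty.2 hempty) (D.bag_vert a) (D.bag_vert a')
    refine ⟨i, Or.inr fun b hb => hi _ (D.pathConvex b) ?_ ?_⟩
    · exact D.bag_edge b a (hAB a ha b hb).symm
    · exact D.bag_edge b a' (hAB a' ha' b hb).symm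

theorem ibn_le_treeIndepNum [Finite V] (G : SimpleGraph V) : ibn G ≤ treeIndepNum G := by
  classical
  obtain ⟨D, hD⟩ := exists_treeDecomp_setIndepNum_le G
  refine csSup_le' ?_
  rintro s ⟨e⟩
  let l : Fin s ↪ V := ⟨fun i => e (.inl i), e.injective.comp Sum.inl_injective⟩
  let r : Fin s ↪ V := ⟨fun i => e (.inr i), e.injective.comp Sum.inr_injective⟩
  have hl : ∀ u ∈ Finset.univ.map l, ∀ v ∈ Finset.univ.map l, u ≠ v → ¬ G.Adj u v := by
    simp [l]
  have hr : ∀ u ∈ Finset.univ.map r, ∀ v ∈ Finset.univ.map r, u ≠ v → ¬ G.Adj u v := by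
    simp [r]
  obtain ⟨i, hi | hi⟩ := D.exists_bag_of_biclique (Finset.univ.map l) (Finset.univ.map r)
    (by simp [l, r])
  · simpa using (card_le_setIndepNum hi hl).trans (hD i)
  · simpa using (card_le_setIndepNum hi hr).trans (hD i)

theorem TreeDecomp.exists_nonadj_of_cycleGraph_five (D : TreeDecomp G) (e : cycleGraph 5 ↪g G) :
    ∃ i, ∃ u ∈ D.bag i, ∃ v ∈ D.bag i, u ≠ v ∧ ¬ G.Adj u v := by
  by_contra! hclique
  have hmeet : ∀ j k, (cycleGraph 5).Adj j k →
      ({i | e j ∈ D.bag i} ∩ {i | e k ∈ D.bag i}).Nonempty := fun j k hjk =>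
    D.bag_edge _ _ (e.map_adj_iff.2 hjk)
  have hdis : ∀ j k, j ≠ k → ¬ (cycleGraph 5).Adj j k →
      ∀ i, e j ∈ D.bag i → e k ∈ D.bag i → False := fun j k hjk hn i hj hk =>
    hn (e.map_adj_iff.1 (hclique i _ hj _ hk (e.injective.ne hjk)))
  have h34 : PathConvex D.T ({i | e 3 ∈ D.bag i} ∪ {i | e 4 ∈ D.bag i}) :=
    .of_preconnected D.tree.isAcyclic (induce_union_connected (D.bag_conn (e 3)).preconnected
      (D.bag_conn (e 4)).preconnected (hmeet 3 4 (by decide))).preconnected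
  obtain ⟨i, -, hi⟩ := PathConvex.exists_gate D.tree (D.pathConvex (e 0)) (D.pathConvex (e 2))
      (Set.disjoint_left.2 (hdis 0 2 (by decide) (by decide)))
      (D.bag_vert (e 0)) (D.bag_vert (e 2))
  have h1 := hi _ (D.pathConvex (e 1)) (hmeet 1 0 (by decide)) (hmeet 1 2 (by decide))
  rcases hi _ h34
    ((hmeet 4 0 (by decide)).mono (Set.inter_subset_inter_left _ Set.subset_union_right))
    ((hmeet 3 2 (by decide)).mono (Set.inter_subset_inter_left _ Set.subset_union_left)) with h | h
  · exact hdis 1 3 (by decide) (by decide) i h1 h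
  · exact hdis 1 4 (by decide) (by decide) i h1 h

theorem two_le_treeIndepNum_of_cycleGraph_five [Finite V] (e : cycleGraph 5 ↪g G) :
    2 ≤ treeIndepNum G := by
  classical
  obtain ⟨D, hD⟩ := exists_treeDecomp_setIndepNum_le G
  obtain ⟨i, u, hu, v, hv, huv, hn⟩ := D.exists_nonadj_of_cycleGraph_five e
  refine le_trans ?_ (hD i)
  rw [← Finset.card_pair huv]
  refine card_le_setIndepNum ?_ ?_
  · simp [Set.insert_subset_iff, hu, hv]
  · have hn' : ¬ G.Adj v u := fun h => hn h.symm
    simp [hn, hn']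

end LowerBounds

section UpperBounds

variable {V : Type} {G : SimpleGraph V}

/-- The star-shaped tree decomposition of a graph whose vertices outside `{v | c v = none}` are
grouped by `c` into pairwise nonadjacent classes. -/
def TreeDecomp.star {κ : Type} (c : V → Option κ)
    (hc : ∀ u v, G.Adj u v → c u ≠ none → c v ≠ none → c u = c v) : TreeDecomp G where
  ι := Option κ
  T := starGraph none
  tree := isTree_starGraph none
  bag k := {v | c v = none ∨ c v = k}
  bag_vert v := ⟨c v, Or.inr rfl⟩
  bag_edge u v huv := by
    by_cases hu : c u = none
    · exact ⟨c v, Or.inl hu, Or.inr rfl⟩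
    by_cases hv : c v = none
    · exact ⟨c u, Or.inr rfl, Or.inl hv⟩
    · exact ⟨c u, Or.inr rfl, Or.inr (hc u v huv hu hv).symm⟩
  bag_conn v := by
    by_cases hv : c v = none
    · have h : {k | v ∈ {v | c v = none ∨ c v = k}} = Set.univ := by
        ext k
        simp [hv]
      rw [h]
      exact (induceUnivIso _).connected_iff.2 (connected_starGraph none)
    · have h : {k | v ∈ {v | c v = none ∨ c v = k}} = {c v} := by
        ext k
        simp [hv, eq_comm]
      rw [h]
      exact IsTree.of_subsingleton.connected

theorem isTree_hasse_nat : (hasse ℕ).IsTree := by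
  refine ⟨⟨hasse_preconnected_of_succ ℕ⟩, isAcyclic_iff_forall_adj_isBridge.2 ?_⟩
  have key : ∀ a b : ℕ, a + 1 = b → (hasse ℕ).IsBridge s(a, b) := by
    rintro a _ rfl
    rw [isBridge_iff]
    rintro ⟨w⟩
    have hle : ∀ x y, ((hasse ℕ).deleteEdges {s(a, a + 1)}).Walk x y → x ≤ a → y ≤ a := by
      intro x y w
      induction w with
      | nil => exact id
      | cons h _ ih =>
        intro hx
        refine ih ?_
        simp only [deleteEdges_adj, hasse_adj, Nat.covBy_iff_add_one_eq, Set.mem_singleton_iff,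
          Sym2.eq_iff] at h
        omega
    have := hle _ _ w le_rfl
    omega
  intro a b hab
  simp only [hasse_adj, Nat.covBy_iff_add_one_eq] at hab
  rcases hab with hab | hab
  · exact key a b hab
  · rw [Sym2.eq_swap]
    exact key b a hab

/-- The path-shaped tree decomposition of a graph whose adjacent vertices have intersecting
intervals `[lo v, hi v]`. -/
def TreeDecomp.interval (lo hi : V → ℕ) (hle : ∀ v, lo v ≤ hi v)
    (hadj : ∀ u v, G.Adj u v → lo u ≤ hi v) : TreeDecomp G where
  ι := ℕ
  T := hasse ℕ
  tree := isTree_hasse_nat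
  bag t := {v | lo v ≤ t ∧ t ≤ hi v}
  bag_vert v := ⟨lo v, le_rfl, hle v⟩
  bag_edge u v huv := ⟨max (lo u) (lo v), ⟨le_max_left _ _, max_le (hle u) (hadj v u huv.symm)⟩,
    ⟨le_max_right _ _, max_le (hadj u v huv) (hle v)⟩⟩
  bag_conn v := by
    have hreach : ∀ t (ht : lo v ≤ t ∧ t ≤ hi v),
        ((hasse ℕ).induce {t | lo v ≤ t ∧ t ≤ hi v}).Reachable ⟨lo v, le_rfl, hle v⟩ ⟨t, ht⟩ := by
      rintro t ⟨h₁, h₂⟩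
      induction t, h₁ using Nat.le_induction with
      | base => exact .refl _
      | succ t h₁ ih =>
        refine (ih (by omega)).trans (Adj.reachable ?_)
        simp [hasse_adj, Nat.covBy_iff_add_one_eq]
    have hpre : ((hasse ℕ).induce {t | lo v ≤ t ∧ t ≤ hi v}).Preconnected := fun x y =>
      (hreach x x.2).symm.trans (hreach y y.2)
    exact connected_iff _ |>.2 ⟨hpre, ⟨lo v, le_rfl, hle v⟩⟩

/-- A graph covered by two cliques with nested neighbourhoods between them has a tree
decomposition into cliques. -/
theorem treeIndepNum_le_one_of_nested [Finite V] (A : Set V)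
    (hA : ∀ u ∈ A, ∀ v ∈ A, u ≠ v → G.Adj u v) (hB : ∀ u ∉ A, ∀ v ∉ A, u ≠ v → G.Adj u v)
    (hnest : ∀ a ∈ A, ∀ a' ∈ A, ∀ b ∉ A, ∀ b' ∉ A,
      G.Adj a b → G.Adj a' b' → G.Adj a b' ∨ G.Adj a' b) :
    treeIndepNum G ≤ 1 := by
  classical
  let f : V → ℕ := fun a => {b | b ∉ A ∧ G.Adj a b}.ncard
  let g : V → ℕ := fun b => sInf ({n | ∃ a ∈ A, G.Adj a b ∧ f a = n} ∪ {Nat.card V + 1})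
  have hf : ∀ a, f a ≤ Nat.card V := fun a => Set.ncard_le_card _
  have hg : ∀ b, g b ≤ Nat.card V + 1 := fun b => Nat.sInf_le (Or.inr rfl)
  have hgf : ∀ a ∈ A, ∀ b, G.Adj a b → g b ≤ f a := fun a ha b hab =>
    Nat.sInf_le (Or.inl ⟨a, ha, hab, rfl⟩)
  have hfg : ∀ a ∈ A, ∀ b ∉ A, g b ≤ f a → G.Adj a b := by
    intro a ha b hb hle
    rcases Nat.sInf_mem (s := {n | ∃ a ∈ A, G.Adj a b ∧ f a = n} ∪ {Nat.card V + 1})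
      ⟨_, Or.inr rfl⟩ with ⟨a₀, ha₀, hab₀, h₀⟩ | h
    · by_contra hab
      have hlt : f a < f a₀ := by
        refine Set.ncard_lt_ncard
          (Set.ssubset_iff_of_subset ?_ |>.2 ⟨b, ⟨hb, hab₀⟩, fun h => hab h.2⟩)
        rintro b' ⟨hb', hab'⟩
        exact ⟨hb', (hnest a₀ ha₀ a ha b hb b' hb' hab₀ hab').resolve_right hab⟩
      change f a₀ = g b at h₀
      omega
    · change g b = Nat.card V + 1 at h
      have := hf a
      omega
  refine treeIndepNum_le (TreeDecomp.interval (fun v => if v ∈ A then 0 else g v)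
    (fun v => if v ∈ A then f v else Nat.card V + 1) ?_ ?_) fun t => setIndepNum_le_one ?_
  · intro v
    by_cases hv : v ∈ A <;> simp [hv, hg]
  · intro u v huv
    by_cases hu : u ∈ A <;> by_cases hv : v ∈ A <;> simp only [hu, hv, if_true, if_false]
    · exact Nat.zero_le _
    · exact Nat.zero_le _
    · exact hgf v hv u huv.symm
    · exact hg u
  · rintro u ⟨hu₁, hu₂⟩ v ⟨hv₁, hv₂⟩ huv
    by_cases hu : u ∈ A <;> by_cases hv : v ∈ A <;>
      simp only [hu, hv, if_true, if_false] at hu₁ hu₂ hv₁ hv₂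
    · exact hA u hu v hv huv
    · exact hfg u hu v hv (hv₁.trans hu₂)
    · exact (hfg v hv u hu (hu₁.trans hv₂)).symm
    · exact hB u hu v hv huv

end UpperBounds

section InducedSubgraphs

variable {V : Type} {G : SimpleGraph V}

theorem nonempty_cycleGraph_four_embedding {a b c d : V} (hab : G.Adj a b) (hbc : G.Adj b c)
    (hcd : G.Adj c d) (hda : G.Adj d a) (hac : ¬ G.Adj a c) (hbd : ¬ G.Adj b d)
    (hac' : a ≠ c) (hbd' : b ≠ d) : Nonempty (cycleGraph 4 ↪g G) := by
  have hadj : ∀ i j, G.Adj (![a, b, c, d] i) (![a, b, c, d] j) ↔ (cycleGraph 4).Adj i j := by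
    intro i j
    have := hab.symm; have := hbc.symm; have := hcd.symm; have := hda.symm
    have : ¬ G.Adj c a := fun h => hac h.symm
    have : ¬ G.Adj d b := fun h => hbd h.symm
    fin_cases i <;> fin_cases j <;> simp_all <;> decide
  refine ⟨⟨⟨![a, b, c, d], fun i j h => ?_⟩, hadj _ _⟩⟩
  have := hab.ne; have := hbc.ne; have := hcd.ne; have := hda.ne
  fin_cases i <;> fin_cases j <;> simp_all

theorem nonempty_cycleGraph_five_embedding {a b c d e : V} (hab : G.Adj a b) (hbc : G.Adj b c)
    (hcd : G.Adj c d) (hde : G.Adj d e) (hea : G.Adj e a) (hac : ¬ G.Adj a c)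
    (had : ¬ G.Adj a d) (hbd : ¬ G.Adj b d) (hbe : ¬ G.Adj b e) (hce : ¬ G.Adj c e) :
    Nonempty (cycleGraph 5 ↪g G) := by
  have hadj : ∀ i j, G.Adj (![a, b, c, d, e] i) (![a, b, c, d, e] j) ↔
      (cycleGraph 5).Adj i j := by
    intro i j
    have := hab.symm; have := hbc.symm; have := hcd.symm; have := hde.symm; have := hea.symm
    have : ¬ G.Adj c a := fun h => hac h.symm
    have : ¬ G.Adj d a := fun h => had h.symm
    have : ¬ G.Adj d b := fun h => hbd h.symm
    have : ¬ G.Adj e b := fun h => hbe h.symm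
    have : ¬ G.Adj e c := fun h => hce h.symm
    fin_cases i <;> fin_cases j <;> simp_all <;> decide
  refine ⟨⟨⟨![a, b, c, d, e], fun i j h => ?_⟩, hadj _ _⟩⟩
  have htwin : ∀ i j : Fin 5, (∀ k, (cycleGraph 5).Adj i k ↔ (cycleGraph 5).Adj j k) → i = j := by
    decide
  refine htwin i j fun k => ?_
  rw [← hadj, ← hadj, h]

theorem IndFree.false_of_P3plusP1 (hfree : IndFree P3plusP1 G) {a b c d : V} (hab : G.Adj a b)
    (hbc : G.Adj b c) (hac : ¬ G.Adj a c) (hne : a ≠ c) (hda : ¬ G.Adj d a) (hdb : ¬ G.Adj d b)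
    (hdc : ¬ G.Adj d c) : False := by
  have hdb' : d ≠ b := fun h => hdc (h ▸ hbc)
  have hda' : d ≠ a := fun h => hdb (h ▸ hab)
  have hdc' : d ≠ c := fun h => hdb (h ▸ hbc.symm)
  have hadj : ∀ i j, G.Adj (Sum.elim ![a, b, c] ![d] i) (Sum.elim ![a, b, c] ![d] j) ↔
      P3plusP1.Adj i j := by
    have := hab.symm; have := hbc.symm
    have : ¬ G.Adj c a := fun h => hac h.symm
    have : ¬ G.Adj a d := fun h => hda h.symm
    have : ¬ G.Adj b d := fun h => hdb h.symm
    have : ¬ G.Adj c d := fun h => hdc h.symm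
    rintro (i | i) (j | j) <;> fin_cases i <;> fin_cases j <;>
      simp_all [P3plusP1, pathGraph_adj]
  refine hfree.false ⟨⟨Sum.elim ![a, b, c] ![d], ?_⟩, hadj _ _⟩
  have := hab.ne; have := hbc.ne
  rintro (i | i) (j | j) h <;> fin_cases i <;> fin_cases j <;> simp_all

/-- The four-cycle is the biclique with sides of size two. -/
def cycleGraphFourIso : cycleGraph 4 ≃g completeBipartiteGraph (Fin 2) (Fin 2) where
  toFun := ![.inl 0, .inr 0, .inl 1, .inr 1]
  invFun := Sum.elim ![0, 2] ![1, 3]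
  left_inv := by decide
  right_inv := by decide
  map_rel_iff' {i j} := by
    fin_cases i <;> fin_cases j <;> simp [cycleGraph_adj] <;> decide

theorem two_le_ibn_iff [Finite V] : 2 ≤ ibn G ↔ Nonempty (cycleGraph 4 ↪g G) := by
  constructor
  · intro h
    obtain ⟨e⟩ := Nat.sSup_mem (s := {s | Nonempty (completeBipartiteGraph (Fin s) (Fin s) ↪g G)})
      ⟨0, ⟨⟨⟨fun x => (x.elim Fin.elim0 Fin.elim0), fun x => x.elim Fin.elim0 Fin.elim0⟩,
        fun {x} => x.elim Fin.elim0 Fin.elim0⟩⟩⟩ (bddAbove_induced_biclique G)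
    have hinj := (Fin.castLEEmb h).injective
    let k : completeBipartiteGraph (Fin 2) (Fin 2) ↪g
        completeBipartiteGraph (Fin (ibn G)) (Fin (ibn G)) :=
      ⟨⟨Sum.map (Fin.castLE h) (Fin.castLE h), hinj.sumMap hinj⟩, by
        rintro (x | x) (y | y) <;> exact Iff.rfl⟩
    exact ⟨(e.comp k).comp cycleGraphFourIso.toEmbedding⟩
  · rintro ⟨e⟩
    exact le_csSup (bddAbove_induced_biclique G) ⟨e.comp cycleGraphFourIso.symm.toEmbedding⟩

end InducedSubgraphs

section MainCases

variable {V : Type} [Finite V] {G : SimpleGraph V}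

/-- If no three vertices are independent and there is neither an induced four-cycle nor an induced
five-cycle, then there is a tree decomposition into cliques. -/
theorem treeIndepNum_le_one_of_indep_le_two
    (hα : ∀ t : Finset V, (∀ u ∈ t, ∀ v ∈ t, u ≠ v → ¬ G.Adj u v) → t.card ≤ 2)
    (h4 : IndFree (cycleGraph 4) G) (h5 : IndFree (cycleGraph 5) G) : treeIndepNum G ≤ 1 := by
  classical
  have htri : ∀ u v w, u ≠ v → u ≠ w → v ≠ w → ¬ G.Adj u v → ¬ G.Adj u w → G.Adj v w := by
    intro u v w huv huw hvw nuv nuw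
    by_contra nvw
    have := hα {u, v, w} (by simp [G.adj_comm v u, G.adj_comm w u, G.adj_comm w v, *])
    rw [Finset.card_eq_three.2 ⟨u, v, w, huv, huw, hvw, rfl⟩] at this
    omega
  have hC4 : ∀ a b c d, G.Adj a b → G.Adj b c → G.Adj c d → G.Adj d a → a ≠ c → b ≠ d →
      G.Adj a c ∨ G.Adj b d := by
    intro a b c d hab hbc hcd hda hac hbd
    by_contra! h
    exact not_nonempty_iff.2 h4
      (nonempty_cycleGraph_four_embedding hab hbc hcd hda h.1 h.2 hac hbd)
  by_cases hcomplete : ∀ x y, x ≠ y → G.Adj x y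
  · exact treeIndepNum_le (TreeDecomp.single G) fun _ =>
      setIndepNum_le_one fun u _ v _ => hcomplete u v
  push Not at hcomplete
  obtain ⟨x, y, hxy, nxy⟩ := hcomplete
  have nyx : ¬ G.Adj y x := fun h => nxy h.symm
  have hX : ∀ u v, u ≠ v → ¬ G.Adj y u → ¬ G.Adj y v → u ≠ y → v ≠ y → G.Adj u v :=
    fun u v huv hu hv huy hvy => htri y u v huy.symm hvy.symm huv hu hv
  have hY : ∀ u v, u ≠ v → ¬ G.Adj x u → ¬ G.Adj x v → u ≠ x → v ≠ x → G.Adj u v :=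
    fun u v huv hu hv hux hvx => htri x u v hux.symm hvx.symm huv hu hv
  have hZ : ∀ u v, u ≠ v → G.Adj x u → G.Adj y u → G.Adj x v → G.Adj y v → G.Adj u v :=
    fun u v huv hxu hyu hxv hyv =>
      (hC4 x u y v hxu hyu.symm hyv hxv.symm hxy huv).resolve_left nxy
  have hcover : ∀ v, v ≠ x → v ≠ y → G.Adj x v ∨ G.Adj y v := by
    intro v hvx hvy
    by_contra! h
    exact nxy (htri v x y hvx hvy hxy (fun h' => h.1 h'.symm) (fun h' => h.2 h'.symm))
  have hsplit : ∀ z p q, G.Adj x z → G.Adj y z → p ≠ y → ¬ G.Adj y p → q ≠ x → ¬ G.Adj x q →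
      ¬ G.Adj z p → G.Adj z q := by
    intro z p q hxz hyz hpy nyp hqx nxq nzp
    by_contra nzq
    have hpx : p ≠ x := fun h => nzp (h ▸ hxz.symm)
    have hqy : q ≠ y := fun h => nzq (h ▸ hyz.symm)
    have hxp : G.Adj x p := (hcover p hpx hpy).resolve_right nyp
    have hyq : G.Adj y q := (hcover q hqx hqy).resolve_left nxq
    have hpq : G.Adj p q := htri z p q (fun h => nyp (h ▸ hyz)) (fun h => nxq (h ▸ hxz))
      (fun h => nxq (h ▸ hxp)) nzp nzq
    exact not_nonempty_iff.2 h5 (nonempty_cycleGraph_five_embedding hxp hpq hyq.symm hyz hxz.symm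
      nxq nxy (fun h => nyp h.symm) (fun h => nzp h.symm) (fun h => nzq h.symm))
  let A : Set V := {v | v ≠ y ∧ (¬ G.Adj y v ∨
    (G.Adj x v ∧ G.Adj y v ∧ ∀ p, p ≠ y → ¬ G.Adj y p → G.Adj v p))}
  have hA : ∀ u ∈ A, ∀ v ∈ A, u ≠ v → G.Adj u v := by
    rintro u ⟨huy, hu | ⟨hxu, hyu, hu⟩⟩ v ⟨hvy, hv | ⟨hxv, hyv, hv⟩⟩ huv
    · exact hX u v huv hu hv huy hvy
    · exact (hv u huy hu).symm
    · exact hu v hvy hv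
    · exact hZ u v huv hxu hyu hxv hyv
  have hnotA : ∀ v ∉ A, v ≠ x ∧ (¬ G.Adj x v ∨
      (G.Adj x v ∧ G.Adj y v ∧ ∀ q, q ≠ x → ¬ G.Adj x q → G.Adj v q)) := by
    intro v hv
    have hvx : v ≠ x := by
      rintro rfl
      exact hv ⟨hxy, Or.inl nyx⟩
    refine ⟨hvx, ?_⟩
    by_cases hvy : v = y
    · exact Or.inl (hvy ▸ nxy)
    by_cases hyv : G.Adj y v
    · by_cases hxv : G.Adj x v
      · refine Or.inr ⟨hxv, hyv, fun q hqx nxq => ?_⟩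
        have hp : ∃ p, p ≠ y ∧ ¬ G.Adj y p ∧ ¬ G.Adj v p := by
          by_contra! h
          exact hv ⟨hvy, Or.inr ⟨hxv, hyv, h⟩⟩
        obtain ⟨p, hpy, nyp, nvp⟩ := hp
        exact hsplit v p q hxv hyv hpy nyp hqx nxq nvp
      · exact Or.inl hxv
    · exact (hv ⟨hvy, Or.inl hyv⟩).elim
  have hB : ∀ u ∉ A, ∀ v ∉ A, u ≠ v → G.Adj u v := by
    intro u hu v hv huv
    obtain ⟨hux, hu | ⟨hxu, hyu, hu⟩⟩ := hnotA u hu <;>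
      obtain ⟨hvx, hv | ⟨hxv, hyv, hv⟩⟩ := hnotA v hv
    · exact hY u v huv hu hv hux hvx
    · exact (hv u hux hu).symm
    · exact hu v hvx hv
    · exact hZ u v huv hxu hyu hxv hyv
  refine treeIndepNum_le_one_of_nested A hA hB ?_
  intro a ha a' ha' b hb b' hb' hab hab'
  by_cases haa : a = a'
  · exact Or.inl (haa ▸ hab')
  by_cases hbb : b = b'
  · exact Or.inl (hbb ▸ hab)
  exact (hC4 a b b' a' hab (hB b hb b' hb' hbb) hab'.symm (hA a' ha' a ha (Ne.symm haa))
    (fun h => hb' (h ▸ ha)) (fun h => hb (h ▸ ha'))).imp_right Adj.symm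

/-- If three vertices are independent, a `(P_3 + P_1)`-free graph is the join of a graph and a
disjoint union of cliques, and a star-shaped tree decomposition is optimal. -/
theorem treeIndepNum_le_ibn_of_three_le (hfree : IndFree P3plusP1 G) (hibn : 1 ≤ ibn G)
    {I : Finset V} (hI : ∀ u ∈ I, ∀ v ∈ I, u ≠ v → ¬ G.Adj u v)
    (hmax : ∀ t : Finset V, (∀ u ∈ t, ∀ v ∈ t, u ≠ v → ¬ G.Adj u v) → t.card ≤ I.card)
    (h3 : 3 ≤ I.card) : treeIndepNum G ≤ ibn G := by
  classical
  have hI' : ∀ u ∈ I, ∀ v ∈ I, ¬ G.Adj u v := fun u hu v hv h => hI u hu v hv h.ne h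
  have hthird : ∀ i j : V, ∃ k ∈ I, k ≠ i ∧ k ≠ j := by
    intro i j
    obtain ⟨k, hk, hkij⟩ := Finset.exists_mem_notMem_of_card_lt_card
      (lt_of_le_of_lt (Finset.card_le_two (a := i) (b := j)) h3)
    simp only [Finset.mem_insert, Finset.mem_singleton, not_or] at hkij
    exact ⟨k, hk, hkij⟩
  have hclass : ∀ v, ¬ (∀ i ∈ I, G.Adj v i) →
      ∃ i ∈ I, (v = i ∨ G.Adj v i) ∧ ∀ j ∈ I, j ≠ i → ¬ G.Adj v j := by
    intro v hv
    by_cases hvI : v ∈ I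
    · exact ⟨v, hvI, Or.inl rfl, fun j hj _ => hI' v hvI j hj⟩
    have hnbr : ∃ i ∈ I, G.Adj v i := by
      by_contra! h
      have hins := hmax (insert v I) (by
        intro a ha b hb hab
        rw [Finset.mem_insert] at ha hb
        rcases ha with rfl | ha <;> rcases hb with rfl | hb
        · exact (hab rfl).elim
        · exact h b hb
        · exact fun h' => h a ha h'.symm
        · exact hI' a ha b hb)
      rw [Finset.card_insert_of_notMem hvI] at hins
      omega
    obtain ⟨i, hi, hvi⟩ := hnbr
    refine ⟨i, hi, Or.inr hvi, fun j hj hji hvj => ?_⟩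
    push Not at hv
    obtain ⟨k, hk, hvk⟩ := hv
    exact hfree.false_of_P3plusP1 hvi.symm hvj (hI' i hi j hj) hji.symm (hI' k hk i hi)
      (fun h => hvk h.symm) (hI' k hk j hj)
  choose! r hrI hr hrj using hclass
  let c : V → Option V := fun v => if ∀ i ∈ I, G.Adj v i then none else some (r v)
  have hc_none : ∀ v, c v = none ↔ ∀ i ∈ I, G.Adj v i := fun v => by simp [c]
  have hc_some : ∀ v, ¬ (∀ i ∈ I, G.Adj v i) → c v = some (r v) := fun v hv => if_neg hv
  have hsep : ∀ u v, G.Adj u v → c u ≠ none → c v ≠ none → c u = c v := by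
    intro u v huv hu hv
    rw [Ne, hc_none] at hu hv
    rw [hc_some u hu, hc_some v hv]
    by_contra hne
    have hne : r u ≠ r v := fun h => hne (congrArg some h)
    have nvu : ¬ G.Adj v (r u) := hrj v hv _ (hrI u hu) hne
    have nuv : ¬ G.Adj u (r v) := hrj u hu _ (hrI v hv) hne.symm
    have hur : G.Adj u (r u) := (hr u hu).resolve_left fun h => nvu (h ▸ huv.symm)
    have hvr : G.Adj v (r v) := (hr v hv).resolve_left fun h => nuv (h ▸ huv)
    obtain ⟨k, hk, hku, hkv⟩ := hthird (r u) (r v)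
    exact hfree.false_of_P3plusP1 hur.symm huv (fun h => nvu h.symm)
      (fun h => hI' _ (hrI u hu) _ (hrI v hv) (h ▸ hvr)) (hI' k hk _ (hrI u hu))
      (fun h => hrj u hu k hk hku h.symm) (fun h => hrj v hv k hk hkv h.symm)
  have hclique : ∀ u v, u ≠ v → c u ≠ none → c u = c v → G.Adj u v := by
    intro u v huv hu huv'
    have hv : c v ≠ none := huv' ▸ hu
    rw [Ne, hc_none] at hu hv
    rw [hc_some u hu, hc_some v hv, Option.some_inj] at huv'
    by_contra nuv
    have hur : G.Adj u (r u) := by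
      refine (hr u hu).resolve_left fun h => ?_
      rcases hr v hv with h' | h'
      · exact huv (h.trans (huv'.trans h'.symm))
      · exact nuv (by rw [h, huv']; exact h'.symm)
    have hvr : G.Adj v (r u) := by
      rw [huv']
      refine (hr v hv).resolve_left fun h => nuv ?_
      rw [h, ← huv']
      exact hur
    obtain ⟨k, hk, hku, -⟩ := hthird (r u) (r u)
    exact hfree.false_of_P3plusP1 hur hvr.symm nuv huv (fun h => hrj u hu k hk hku h.symm)
      (hI' k hk _ (hrI u hu)) (fun h => hrj v hv k hk (huv' ▸ hku) h.symm)
  have hjoin : ∀ u v, c u = none → c v ≠ none → G.Adj u v := by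
    intro u v hu hv
    rw [Ne, hc_none] at hv
    rw [hc_none] at hu
    by_contra nuv
    obtain ⟨j, hj, hjv, -⟩ := hthird (r v) (r v)
    obtain ⟨k, hk, hkv, hkj⟩ := hthird (r v) j
    exact hfree.false_of_P3plusP1 (hu j hj).symm (hu k hk) (hI' j hj k hk) hkj.symm
      (hrj v hv j hj hjv) (fun h => nuv h.symm) (hrj v hv k hk hkv)
  refine treeIndepNum_le (TreeDecomp.star c hsep) fun k => setIndepNum_le fun t htk ht => ?_
  by_cases htU : ∀ v ∈ t, c v = none
  · obtain ⟨J, hJI, hJ⟩ := Finset.exists_subset_card_eq (hmax t ht)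
    exact le_ibn hJ.symm ht (fun u hu v hv => hI u (hJI hu) v (hJI hv))
      fun u hu v hv => (hc_none u).1 (htU u hu) v (hJI hv)
  · push Not at htU
    obtain ⟨w, hw, hwc⟩ := htU
    suffices h : ∀ v ∈ t, v = w from
      (Finset.card_le_one.2 fun u hu v hv => (h u hu).trans (h v hv).symm).trans hibn
    intro v hv
    by_contra hvw
    refine ht w hw v hv (Ne.symm hvw) ?_
    by_cases hvc : c v = none
    · exact (hjoin v w hvc hwc).symm
    · exact hclique w v (Ne.symm hvw) hwc
        (((htk hw).resolve_left hwc).trans ((htk hv).resolve_left hvc).symm)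

end MainCases

/-- Let `G` be a `(P_3 + P_1)`-free graph with at least one edge. Then
`tree-α(G) = ibn(G)`, unless `G` is `C_4`-free but contains an induced `C_5`, in which case
`tree-α(G) = 2`. -/
theorem stmt_14 {V : Type} [Finite V] (G : SimpleGraph V) (hfree : IndFree P3plusP1 G)
    (hedge : ∃ u v : V, G.Adj u v) :
    (IndFree (cycleGraph 4) G ∧ Nonempty (cycleGraph 5 ↪g G) → treeIndepNum G = 2) ∧
    (¬ (IndFree (cycleGraph 4) G ∧ Nonempty (cycleGraph 5 ↪g G)) →
      treeIndepNum G = ibn G) := by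
  classical
  have := Fintype.ofFinite V
  have hlow := ibn_le_treeIndepNum G
  have hibn : 1 ≤ ibn G := by
    obtain ⟨u, v, huv⟩ := hedge
    exact le_ibn (A := {u}) (B := {v}) rfl (by simp) (by simp) (by simpa using huv)
  obtain ⟨I, hI, hmax⟩ := Finset.exists_max_image
    (Finset.univ.filter fun t : Finset V => ∀ u ∈ t, ∀ v ∈ t, u ≠ v → ¬ G.Adj u v)
    Finset.card ⟨∅, by simp⟩
  simp only [Finset.mem_filter, Finset.mem_univ, true_and] at hI hmax
  by_cases h3 : 3 ≤ I.card
  · have heq := (treeIndepNum_le_ibn_of_three_le hfree hibn hI hmax h3).antisymm hlow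
    refine ⟨fun ⟨h4, ⟨e⟩⟩ => ?_, fun _ => heq⟩
    have := two_le_treeIndepNum_of_cycleGraph_five e
    exact (not_nonempty_iff.2 h4 (two_le_ibn_iff.1 (heq ▸ this))).elim
  · have hα : ∀ t : Finset V, (∀ u ∈ t, ∀ v ∈ t, u ≠ v → ¬ G.Adj u v) → t.card ≤ 2 :=
      fun t ht => (hmax t ht).trans (by omega)
    have htwo : treeIndepNum G ≤ 2 :=
      treeIndepNum_le (TreeDecomp.single G) fun _ => setIndepNum_le fun t _ => hα t
    refine ⟨fun ⟨_, ⟨e⟩⟩ => htwo.antisymm (two_le_treeIndepNum_of_cycleGraph_five e),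
      fun hexc => le_antisymm ?_ hlow⟩
    by_cases h4 : IndFree (cycleGraph 4) G
    · have h5 : IndFree (cycleGraph 5) G := not_nonempty_iff.1 fun h => hexc ⟨h4, h⟩
      exact (treeIndepNum_le_one_of_indep_le_two hα h4 h5).trans hibn
    · exact htwo.trans (two_le_ibn_iff.2 (not_isEmpty_iff.1 h4))
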